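/- Let A be a C*-algebra, F a complex Banach space, and P : A → F a bounded n-homogeneous polynomial. Then the following are equivalent: (1) there exists a bounded linear operator T : A → F with P(a) = T(aⁿ) for all a ∈ A; (2) P is orthogonally additive on A (ab = ba = 0 implies P(a+b) = P(a)+P(b)); (3) P is orthogonally additive on the self-adjoint part A_sa (ab = 0 implies P(a+b) = P(a)+P(b) for self-adjoint a, b). -/

import Mathlib

/-- `P : E → F` is a bounded `n`-homogeneous polynomial: `P x = L(x,…,x)` for a bounded
symmetric `n`-linear map `L`. -/
def IsHomogPolynomial {E F : Type*} [NormedAddCommGroup E] [NormedSpace ℂ E]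
    [NormedAddCommGroup F] [NormedSpace ℂ F] (n : ℕ) (P : E → F) : Prop :=
  ∃ L : ContinuousMultilinearMap ℂ (fun _ : Fin n => E) F,
    (∀ (v : Fin n → E) (σ : Equiv.Perm (Fin n)), (L fun i => v (σ i)) = L v) ∧
    ∀ x : E, P x = L fun _ => x

/-- `nupow a n` is the `n`-th power `aⁿ` of `a` (for `n ≥ 1`) in a possibly non-unital
ring: `nupow a 1 = a`, `nupow a (k+1) = a * nupow a k`. -/
def nupow {A : Type*} [NonUnitalRing A] (a : A) : ℕ → A
  | 0 => a
  | 1 => a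
  | (k + 2) => a * nupow a (k + 1)

/-! An orthogonally additive symmetric multilinear map on a commutative C*-algebra vanishes as soon
as two of its arguments have product zero. A bounded bilinear map which annihilates the pairs with
product zero is balanced, that is `φ (u * f) v = φ u (f * v)`, so on such an algebra
`L(f, …, f) = L(fⁿ, g, …, g)` whenever `f ≥ 0` and `f * g = f`.

Now let `a` be a positive element of a C*-algebra and let `e` run through an approximate unit. The
functions `f = (a + e - 1)⁺` and `g = min (a + e) 1` of `a + e` satisfy `f * g = f`, `f → a` and
`g - e = a - f → 0`, whence `L(a, …, a) = lim L(aⁿ, e, …, e)`. The right-hand side is linear in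
`aⁿ`, and since every positive element is an `n`-th power this defines `T` on the positive cone,
hence on the whole algebra. Two analytic maps which agree on the positive cone are equal. -/

open Filter Topology
open scoped ContinuousMapZero

/-- Symmetry of a function of an `n`-tuple under permutations of its arguments. -/
def PermInvariant {n : ℕ} {E F : Type*} (L : (Fin n → E) → F) : Prop :=
  ∀ (v : Fin n → E) (σ : Equiv.Perm (Fin n)), (L fun i => v (σ i)) = L v

theorem cons_const_self {n : ℕ} {E : Type*} (x : E) :
    (Fin.cons x fun _ => x : Fin (n + 1) → E) = fun _ => x := by
  ext i
  cases i using Fin.cases <;> rfl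

namespace PermInvariant

section Tuple

variable {n : ℕ} {E F : Type*}

theorem cons {L : (Fin (n + 1) → E) → F} (hL : PermInvariant L) (u : E) :
    PermInvariant fun v => L (Fin.cons u v) := by
  intro v σ
  change L (Fin.cons u fun i => v (σ i)) = L (Fin.cons u v)
  rw [← hL (Fin.cons u v) (Equiv.Perm.decomposeFin.symm (0, σ))]
  congr 1
  ext i
  cases i using Fin.cases <;> simp

theorem apply_cons_cons_comm {L : (Fin (n + 2) → E) → F} (hL : PermInvariant L)
    (u v : E) (w : Fin n → E) :
    L (Fin.cons u (Fin.cons v w)) = L (Fin.cons v (Fin.cons u w)) := by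
  rw [← hL (Fin.cons v (Fin.cons u w)) (Equiv.swap 0 1)]
  congr 1
  ext i
  refine Fin.cases ?_ (Fin.cases ?_ fun j => ?_) i
  · simp
  · simp
  · rw [Equiv.swap_apply_of_ne_of_ne (Fin.succ_ne_zero _) (by simp [Fin.ext_iff])]
    simp only [Fin.cons_succ]

theorem apply_update_const {L : (Fin (n + 1) → E) → F} (hL : PermInvariant L)
    (u x : E) (i : Fin (n + 1)) :
    L (Function.update (fun _ => x) i u) = L (Fin.cons u fun _ => x) := by
  rw [← hL (Fin.cons u fun _ => x) (Equiv.swap 0 i)]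
  congr 1
  have hcons : (Fin.cons u fun _ => x : Fin (n + 1) → E) = Function.update (fun _ => x) 0 u := by
    ext j
    cases j using Fin.cases <;> simp
  ext j
  simp only [hcons, Function.update_apply, Equiv.swap_apply_eq_iff, Equiv.swap_apply_left]

end Tuple

theorem hasDerivAt_const_add_smul {n : ℕ} {E F : Type*} [NormedAddCommGroup E] [NormedSpace ℝ E]
    [NormedAddCommGroup F] [NormedSpace ℝ F] {M : E [×(n + 1)]→L[ℝ] F}
    (hM : PermInvariant M) (u x : E) :
    HasDerivAt (fun s : ℝ => M fun _ => x + s • u) ((n + 1) • M (Fin.cons u fun _ => x)) 0 := by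
  have hline : HasDerivAt (fun (s : ℝ) (_ : Fin (n + 1)) => x + s • u) (fun _ => u) 0 :=
    hasDerivAt_pi.2 fun _ => by simpa using ((hasDerivAt_id (0 : ℝ)).smul_const u).const_add x
  refine ((M.hasFDerivAt _).comp_hasDerivAt (0 : ℝ) hline).congr_deriv ?_
  simp [ContinuousMultilinearMap.linearDeriv_apply, hM.apply_update_const]

end PermInvariant

/-- `p` is additive on pairs of orthogonal elements `a`, `b` of `s`, orthogonality being
`a * b = 0 = b * a`. -/
def OrthAdditiveOn {R F : Type*} [NonUnitalNonAssocRing R] [Add F] (p : R → F) (s : Set R) :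
    Prop :=
  ∀ a ∈ s, ∀ b ∈ s, a * b = 0 → b * a = 0 → p (a + b) = p a + p b

namespace OrthAdditiveOn

theorem apply_add {R F : Type*} [NonUnitalNonAssocCommRing R] [Add F] {p : R → F}
    (hp : OrthAdditiveOn p Set.univ)
    {f h : R} (hfh : f * h = 0) :
    p (f + h) = p f + p h :=
  hp f (Set.mem_univ f) h (Set.mem_univ h) hfh (by rw [mul_comm, hfh])

section CommRing

variable {R F : Type*} [NonUnitalNormedCommRing R] [NormedSpace ℝ R] [IsScalarTower ℝ R R]
  [NormedAddCommGroup F] [NormedSpace ℝ F]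

variable {n : ℕ} {M : R [×(n + 2)]→L[ℝ] F}

theorem apply_cons_add_of_mul_eq_zero (ho : OrthAdditiveOn (fun x => M fun _ => x) Set.univ)
    (hM : PermInvariant M) {u f h : R} (hfh : f * h = 0) (huh : u * h = 0) :
    M (Fin.cons u fun _ => f + h) = M (Fin.cons u fun _ => f) := by
  have hsplit : (fun s : ℝ => M fun _ => f + h + s • u) =
      fun s : ℝ => (M fun _ => f + s • u) + M fun _ => h := by
    ext s
    rw [add_right_comm]
    exact ho.apply_add (by rw [add_mul, smul_mul_assoc, hfh, huh, smul_zero, add_zero])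
  have hderiv := hM.hasDerivAt_const_add_smul u (f + h)
  rw [hsplit] at hderiv
  have : IsAddTorsionFree F := .of_isTorsionFree ℝ F
  exact nsmul_right_injective (Nat.succ_ne_zero (n + 1))
    (hderiv.unique ((hM.hasDerivAt_const_add_smul u f).add_const _))

theorem apply_cons_eq_zero_of_mul_eq_zero
    (ho : OrthAdditiveOn (fun x => M fun _ => x) Set.univ)
    (hM : PermInvariant M) {u h : R} (huh : u * h = 0) : M (Fin.cons u fun _ => h) = 0 := by
  have := ho.apply_cons_add_of_mul_eq_zero hM (zero_mul h) huh
  rw [zero_add] at this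
  exact this.trans (M.map_coord_zero 1 rfl)

theorem apply_cons_add_of_mul_eq_self (ho : OrthAdditiveOn (fun x => M fun _ => x) Set.univ)
    (hM : PermInvariant M) (u : R) {b f h : R} (hhb : h * b = h) (hbf : b * f = 0) :
    M (Fin.cons u fun _ => f + h) =
      M (Fin.cons u fun _ => f) + M (Fin.cons u fun _ => h) := by
  have hfh : f * h = 0 := by rw [← hhb, mul_left_comm, mul_comm f, hbf, mul_zero]
  have huh : (u - b * u) * h = 0 := by
    rw [sub_mul, mul_right_comm, mul_comm b, hhb, mul_comm, sub_self]
  have huf : b * u * f = 0 := by rw [mul_right_comm, hbf, zero_mul]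
  have hsplit (w : Fin (n + 1) → R) :
      M (Fin.cons u w) = M (Fin.cons (u - b * u) w) + M (Fin.cons (b * u) w) := by
    rw [← M.cons_add, sub_add_cancel]
  rw [hsplit, hsplit fun _ => f, hsplit fun _ => h,
    ho.apply_cons_add_of_mul_eq_zero hM hfh huh, ho.apply_cons_eq_zero_of_mul_eq_zero hM huh,
    ho.apply_cons_eq_zero_of_mul_eq_zero hM huf, add_comm f h,
    ho.apply_cons_add_of_mul_eq_zero hM (by rw [mul_comm, hfh]) huf]
  abel

end CommRing

end OrthAdditiveOn

section ContinuousFunctions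

variable {X F : Type*} [TopologicalSpace X] [CompactSpace X] [Zero X]
  [NormedAddCommGroup F] [NormedSpace ℝ F]

theorem norm_le_of_forall_abs_le {f : C(X, ℝ)₀} {c : ℝ} (hc : 0 ≤ c) (h : ∀ x, |f x| ≤ c) :
    ‖f‖ ≤ c := by
  rw [ContinuousMapZero.norm_def]
  exact (ContinuousMap.norm_le _ hc).2 h

theorem abs_apply_le_norm (f : C(X, ℝ)₀) (x : X) : |f x| ≤ ‖f‖ := by
  rw [ContinuousMapZero.norm_def]
  exact ContinuousMap.norm_coe_le_norm (f : C(X, ℝ)) x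

theorem mem_closure_setOf_locally_unital (h : C(X, ℝ)₀) :
    h ∈ closure {h' : C(X, ℝ)₀ | ∃ b, h' * b = h' ∧ ∀ f, f * h = 0 → b * f = 0} := by
  refine Metric.mem_closure_iff.2 fun ε hε => ?_
  obtain ⟨δ, hδ, hδε⟩ := exists_between hε
  let clamp : C(ℝ, ℝ)₀ := ⟨⟨fun t => t - max (-δ) (min t δ), by fun_prop⟩, by simp [hδ.le]⟩
  let bump : C(ℝ, ℝ)₀ := ⟨⟨fun t => min (|t| / δ) 1, by fun_prop⟩, by simp⟩
  refine ⟨clamp.comp h, ⟨bump.comp h, ?_, fun f hfh => ?_⟩, ?_⟩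
  · ext x
    change (h x - max (-δ) (min (h x) δ)) * min (|h x| / δ) 1 = h x - max (-δ) (min (h x) δ)
    rcases le_total (|h x|) δ with hx | hx
    · rw [abs_le] at hx
      rw [min_eq_left hx.2, max_eq_right hx.1, sub_self, zero_mul]
    · rw [min_eq_right ((one_le_div hδ).2 hx), mul_one]
  · ext x
    change min (|h x| / δ) 1 * f x = 0
    rcases mul_eq_zero.1 (DFunLike.congr_fun hfh x) with (hx : f x = 0) | (hx : h x = 0) <;>
      simp [hx]
  · rw [dist_eq_norm]
    refine (norm_le_of_forall_abs_le hδ.le fun x => ?_).trans_lt hδε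
    change |h x - (h x - max (-δ) (min (h x) δ))| ≤ δ
    rw [sub_sub_cancel, abs_le]
    exact ⟨le_max_left _ _, max_le (by linarith) (min_le_right _ _)⟩

namespace OrthAdditiveOn

theorem curryLeft {n : ℕ} {M : C(X, ℝ)₀ [×(n + 2)]→L[ℝ] F}
    (ho : OrthAdditiveOn (fun f => M fun _ => f) Set.univ) (hM : PermInvariant M)
    (u : C(X, ℝ)₀) : OrthAdditiveOn (fun f => M.curryLeft u fun _ => f) Set.univ := by
  intro f _ h _ hfh _
  have hclosed : IsClosed {h' : C(X, ℝ)₀ | (M.curryLeft u fun _ => f + h') =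
      (M.curryLeft u fun _ => f) + M.curryLeft u fun _ => h'} :=
    isClosed_eq (by fun_prop) (by fun_prop)
  refine closure_minimal ?_ hclosed (mem_closure_setOf_locally_unital h)
  rintro h' ⟨b, hb, hb'⟩
  exact ho.apply_cons_add_of_mul_eq_self hM u hb (hb' f hfh)

theorem apply_cons_cons_eq_zero {n : ℕ} {M : C(X, ℝ)₀ [×(n + 2)]→L[ℝ] F}
    (ho : OrthAdditiveOn (fun f => M fun _ => f) Set.univ) (hM : PermInvariant M)
    {u v : C(X, ℝ)₀} (huv : u * v = 0) (g : C(X, ℝ)₀) :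
    M (Fin.cons u (Fin.cons v fun _ => g)) = 0 := by
  induction n with
  | zero =>
    rw [← ho.apply_cons_eq_zero_of_mul_eq_zero hM huv]
    congr 2
    ext i
    rw [Fin.fin_one_eq_zero i, Fin.cons_zero]
  | succ n ih =>
    rw [← cons_const_self g, (hM.cons u).apply_cons_cons_comm, hM.apply_cons_cons_comm]
    exact ih (ho.curryLeft hM g) (hM.cons g)

end OrthAdditiveOn

end ContinuousFunctions

section Staircase

/-- The ramp `t ↦ (t - j)⁺ ∧ 1`, which cuts the slice between the heights `j` and `j + 1` out of a
nonnegative function. -/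
def ramp (j : ℕ) : C(ℝ, ℝ)₀ :=
  ⟨⟨fun t => max 0 (min 1 (t - j)), by fun_prop⟩, by simp⟩

theorem ramp_apply (j : ℕ) (t : ℝ) : ramp j t = max 0 (min 1 (t - j)) := rfl

theorem ramp_eq_one {j : ℕ} {t : ℝ} (h : j + 1 ≤ t) : ramp j t = 1 := by
  rw [ramp_apply, min_eq_left (by linarith), max_eq_right zero_le_one]

theorem ramp_eq_zero {j : ℕ} {t : ℝ} (h : t ≤ j) : ramp j t = 0 := by
  rw [ramp_apply, max_eq_left ((min_le_right _ _).trans (by linarith))]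

theorem ramp_mem_Icc (j : ℕ) (t : ℝ) : ramp j t ∈ Set.Icc 0 1 :=
  ⟨le_max_left _ _, max_le zero_le_one (min_le_left _ _)⟩

theorem ramp_mul_ramp_of_lt {i j : ℕ} (hij : i < j) : ramp i * ramp j = ramp j := by
  ext t
  change ramp i t * ramp j t = ramp j t
  have hij' : (i + 1 : ℝ) ≤ j := by exact_mod_cast hij
  rcases le_total t j with ht | ht
  · rw [ramp_eq_zero ht, mul_zero]
  · rw [ramp_eq_one (hij'.trans ht), one_mul]

theorem abs_sub_four_mul_sum_ramp_le {s : ℕ} (hs : s ≤ 3) {t : ℝ} (ht : 0 ≤ t) {m : ℕ}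
    (htm : t ≤ 4 * m) : |t - 4 * ∑ k ∈ Finset.range m, ramp (4 * k + s) t| ≤ 4 := by
  have hs' : (s : ℝ) ≤ 3 := by exact_mod_cast hs
  induction m with
  | zero =>
    have ht0 : t = 0 := ht.antisymm' (by simpa using htm)
    simp [ht0]
  | succ m ih =>
    rw [Finset.sum_range_succ]
    rcases le_total t (4 * m) with h | h
    · rw [ramp_eq_zero (by push_cast; linarith [s.cast_nonneg (α := ℝ)]), add_zero]
      exact ih h
    · have hones : ∑ k ∈ Finset.range m, ramp (4 * k + s) t = m := by
        rw [Finset.sum_congr rfl fun k hk => ramp_eq_one ?_]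
        · simp
        · have : (k + 1 : ℝ) ≤ m := by exact_mod_cast Finset.mem_range.1 hk
          push_cast
          linarith
      obtain ⟨hl, hr⟩ := ramp_mem_Icc (4 * m + s) t
      push_cast at htm
      rw [hones, abs_le]
      constructor <;> linarith

end Staircase

section Nested

/-- Each term of the sequence `c` is a unit for all the later ones. -/
def IsNested {R : Type*} [Mul R] (c : ℕ → R) : Prop :=
  ∀ ⦃i j⦄, i < j → c i * c j = c j

/-- The cutoff separating the slices `4 * k + 1`, on which it acts as a unit, from the slices
`4 * k + 3`, on which it vanishes. -/
def sliceCutoff {R : Type*} [AddCommGroup R] (c : ℕ → R) (m : ℕ) : R :=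
  ∑ k ∈ Finset.range m, (c (4 * k) - c (4 * k + 2))

namespace IsNested

variable {R : Type*} [NonUnitalCommRing R] {c : ℕ → R}

theorem mul_sub_mul_self_of_lt (hc : IsNested c) {i j : ℕ} (hij : i < j) :
    c i * (c j - c j * c j) = c j - c j * c j := by
  rw [mul_sub, ← mul_assoc, hc hij]

theorem mul_sub_mul_self_of_gt (hc : IsNested c) {i j : ℕ} (hji : j < i) :
    c i * (c j - c j * c j) = 0 := by
  rw [mul_sub, ← mul_assoc, mul_comm (c i), hc hji, mul_comm (c i), hc hji, sub_self]

theorem sliceCutoff_mul_eq_zero (hc : IsNested c) (m i : ℕ) :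
    sliceCutoff c m * (c (4 * i + 3) - c (4 * i + 3) * c (4 * i + 3)) = 0 := by
  rw [sliceCutoff, Finset.sum_mul]
  refine Finset.sum_eq_zero fun k _ => ?_
  rw [sub_mul]
  rcases le_or_gt k i with hki | hik
  · rw [hc.mul_sub_mul_self_of_lt (by lia), hc.mul_sub_mul_self_of_lt (by lia), sub_self]
  · rw [hc.mul_sub_mul_self_of_gt (by lia), hc.mul_sub_mul_self_of_gt (by lia), sub_self]

theorem sliceCutoff_mul_eq_self (hc : IsNested c) {m i : ℕ} (him : i < m) :
    sliceCutoff c m * (c (4 * i + 1) - c (4 * i + 1) * c (4 * i + 1)) =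
      c (4 * i + 1) - c (4 * i + 1) * c (4 * i + 1) := by
  rw [sliceCutoff, Finset.sum_mul, Finset.sum_eq_single_of_mem i (Finset.mem_range.2 him)]
  · rw [sub_mul, hc.mul_sub_mul_self_of_lt (by lia), hc.mul_sub_mul_self_of_gt (by lia), sub_zero]
  · intro k _ hki
    rw [sub_mul]
    rcases lt_or_gt_of_ne hki with hki | hik
    · rw [hc.mul_sub_mul_self_of_lt (by lia), hc.mul_sub_mul_self_of_lt (by lia), sub_self]
    · rw [hc.mul_sub_mul_self_of_gt (by lia), hc.mul_sub_mul_self_of_gt (by lia), sub_self]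

theorem mul_mul_sliceCutoff_mul (hc : IsNested c) (m i : ℕ) (v : R) :
    c (4 * i + 3) * (c (4 * i + 3) * (sliceCutoff c m * v)) =
      c (4 * i + 3) * (sliceCutoff c m * v) := by
  have h := congrArg (· * v) (hc.sliceCutoff_mul_eq_zero m i)
  simp only [mul_sub, sub_mul, zero_mul, sub_eq_zero] at h
  simpa only [mul_assoc, mul_left_comm] using h.symm

theorem mul_mul_sub_sliceCutoff_mul (hc : IsNested c) {m i : ℕ} (him : i < m) (v : R) :
    c (4 * i + 1) * (c (4 * i + 1) * (v - sliceCutoff c m * v)) =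
      c (4 * i + 1) * (v - sliceCutoff c m * v) := by
  have h := congrArg (· * v) (hc.sliceCutoff_mul_eq_self him)
  simp only [mul_sub, sub_mul, mul_assoc, mul_left_comm] at h ⊢
  rw [← sub_eq_zero] at h ⊢
  rw [← h]
  abel

end IsNested

end Nested

section Balanced

theorem apply_mul_sum_eq_of_idempotent_on {𝕜 R F ι : Type*} [CommRing 𝕜] [NonUnitalCommRing R]
    [Module 𝕜 R] [AddCommGroup F] [Module 𝕜 F] {φ : R →ₗ[𝕜] R →ₗ[𝕜] F}
    (hφ : ∀ u v, u * v = 0 → φ u v = 0) (u : R) {v : R} {c : ι → R}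
    {s : Finset ι} (hc : ∀ k ∈ s, c k * (c k * v) = c k * v) :
    φ (u * ∑ k ∈ s, c k) v = φ u ((∑ k ∈ s, c k) * v) := by
  rw [Finset.mul_sum, Finset.sum_mul, map_sum, map_sum, LinearMap.sum_apply]
  refine Finset.sum_congr rfl fun k hk => ?_
  have hleft : φ (u * c k) (v - c k * v) = 0 :=
    hφ _ _ (by rw [mul_assoc, mul_sub, hc k hk, sub_self, mul_zero])
  have hright : φ (u - u * c k) (c k * v) = 0 :=
    hφ _ _ (by rw [sub_mul, mul_assoc, hc k hk, sub_self])
  rw [map_sub, sub_eq_zero] at hleft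
  rw [map_sub, LinearMap.sub_apply, sub_eq_zero] at hright
  rw [hleft, hright]

theorem norm_apply_mul_sub_le {R F : Type*} [NonUnitalNormedRing R] [NormedSpace ℝ R]
    [NormedAddCommGroup F] [NormedSpace ℝ F] {φ : R →ₗ[ℝ] R →ₗ[ℝ] F} {C : ℝ} (hC : 0 ≤ C)
    (hb : ∀ u v, ‖φ u v‖ ≤ C * ‖u‖ * ‖v‖) {u v f c : R} {r : ℝ}
    (hc : φ (u * c) v = φ u (c * v)) (hfc : ‖f - c‖ ≤ r) :
    ‖φ (u * f) v - φ u (f * v)‖ ≤ 2 * r * (C * ‖u‖ * ‖v‖) := by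
  have hsplit : φ (u * f) v - φ u (f * v) = φ (u * (f - c)) v - φ u ((f - c) * v) := by
    simp only [mul_sub, sub_mul, map_sub, LinearMap.sub_apply, hc]
    abel
  have hu : ‖u * (f - c)‖ ≤ ‖u‖ * r := (norm_mul_le _ _).trans (by gcongr)
  have hv : ‖(f - c) * v‖ ≤ r * ‖v‖ := (norm_mul_le _ _).trans (by gcongr)
  calc ‖φ (u * f) v - φ u (f * v)‖
      ≤ ‖φ (u * (f - c)) v‖ + ‖φ u ((f - c) * v)‖ := hsplit ▸ norm_sub_le _ _
    _ ≤ C * (‖u‖ * r) * ‖v‖ + C * ‖u‖ * (r * ‖v‖) := by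
      gcongr
      · exact (hb _ _).trans (by gcongr)
      · exact (hb _ _).trans (by gcongr)
    _ = 2 * r * (C * ‖u‖ * ‖v‖) := by ring

theorem isNested_ramp_comp {X : Type*} [TopologicalSpace X] [Zero X] (f : C(X, ℝ)₀) :
    IsNested fun j => (ramp j).comp f :=
  fun i j hij => by
    ext x
    exact DFunLike.congr_fun (ramp_mul_ramp_of_lt hij) (f x)

variable {X F : Type*} [TopologicalSpace X] [CompactSpace X] [Zero X]

theorem exists_norm_sub_sum_ramp_comp_le {f : C(X, ℝ)₀} (hf : ∀ x, 0 ≤ f x) :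
    ∃ m, ∀ s ≤ 3, ‖f - (4 : ℝ) • ∑ k ∈ Finset.range m, (ramp (4 * k + s)).comp f‖ ≤ 4 := by
  obtain ⟨m, hm⟩ := exists_nat_ge ‖f‖
  refine ⟨m, fun s hs => norm_le_of_forall_abs_le zero_le_four fun x => ?_⟩
  have hfm : f x ≤ 4 * m := by
    linarith [le_abs_self (f x), abs_apply_le_norm f x, m.cast_nonneg (α := ℝ)]
  have := abs_sub_four_mul_sum_ramp_le hs (hf x) hfm
  simpa [ContinuousMapZero.coe_sum] using this

theorem norm_sliceCutoff_ramp_comp_le {f : C(X, ℝ)₀} {m : ℕ}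
    (hm : ∀ s ≤ 3, ‖f - (4 : ℝ) • ∑ k ∈ Finset.range m, (ramp (4 * k + s)).comp f‖ ≤ 4) :
    ‖sliceCutoff (fun j => (ramp j).comp f) m‖ ≤ 2 := by
  set b := sliceCutoff (fun j => (ramp j).comp f) m with hb_def
  have h4b : (4 : ℝ) • b =
      (f - (4 : ℝ) • ∑ k ∈ Finset.range m, (ramp (4 * k + 2)).comp f) -
        (f - (4 : ℝ) • ∑ k ∈ Finset.range m, (ramp (4 * k + 0)).comp f) := by
    simp only [hb_def, sliceCutoff, Finset.sum_sub_distrib, smul_sub, add_zero]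
    abel
  have h8 : ‖(4 : ℝ) • b‖ ≤ 4 + 4 := h4b ▸ norm_sub_le_of_le (hm 2 (by lia)) (hm 0 (by lia))
  rw [norm_smul, Real.norm_ofNat] at h8
  linarith

variable [NormedAddCommGroup F] [NormedSpace ℝ F] {φ : C(X, ℝ)₀ →ₗ[ℝ] C(X, ℝ)₀ →ₗ[ℝ] F} {C : ℝ}

-- The point is that the bound does not depend on `f`: it can then be applied to the multiples of
-- `f`. Staircases approximating `f` move across `φ` exactly, after cutting `v` in two pieces which
-- avoid the edges of their steps.
theorem norm_apply_mul_sub_apply_mul_le (hC : 0 ≤ C) (hb : ∀ u v, ‖φ u v‖ ≤ C * ‖u‖ * ‖v‖)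
    (hφ : ∀ u v, u * v = 0 → φ u v = 0) {f : C(X, ℝ)₀}
    (hf : ∀ x, 0 ≤ f x) (u v : C(X, ℝ)₀) :
    ‖φ (u * f) v - φ u (f * v)‖ ≤ 40 * (C * ‖u‖ * ‖v‖) := by
  obtain ⟨m, hm⟩ := exists_norm_sub_sum_ramp_comp_le hf
  set c : ℕ → C(X, ℝ)₀ := fun j => (ramp j).comp f
  have hc : IsNested c := isNested_ramp_comp f
  set b : C(X, ℝ)₀ := sliceCutoff c m
  have hb2 : ‖b‖ ≤ 2 := norm_sliceCutoff_ramp_comp_le hm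
  have hbv : ‖b * v‖ ≤ 2 * ‖v‖ := (norm_mul_le _ _).trans (by gcongr)
  have hstair {w : C(X, ℝ)₀} {s : ℕ} (hs : s ≤ 3) (hw : ∀ k ∈ Finset.range m,
      c (4 * k + s) * (c (4 * k + s) * w) = c (4 * k + s) * w) :
      ‖φ (u * f) w - φ u (f * w)‖ ≤ 2 * 4 * (C * ‖u‖ * ‖w‖) := by
    refine norm_apply_mul_sub_le hC hb ?_ (hm s hs)
    rw [mul_smul_comm, smul_mul_assoc, map_smul, map_smul, LinearMap.smul_apply,
      apply_mul_sum_eq_of_idempotent_on hφ u hw]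
  have hlow := hstair le_rfl fun k _ => hc.mul_mul_sliceCutoff_mul m k v
  have hhigh := hstair (by lia) fun k hk =>
    hc.mul_mul_sub_sliceCutoff_mul (Finset.mem_range.1 hk) v
  calc ‖φ (u * f) v - φ u (f * v)‖
      = ‖(φ (u * f) (b * v) - φ u (f * (b * v))) +
          (φ (u * f) (v - b * v) - φ u (f * (v - b * v)))‖ := by
        simp only [mul_sub, map_sub]
        congr 1
        abel
    _ ≤ 2 * 4 * (C * ‖u‖ * (2 * ‖v‖)) + 2 * 4 * (C * ‖u‖ * (‖v‖ + 2 * ‖v‖)) := by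
        refine norm_add_le_of_le (hlow.trans ?_) (hhigh.trans ?_)
        · gcongr
        · gcongr
          exact norm_sub_le_of_le le_rfl hbv
    _ = 40 * (C * ‖u‖ * ‖v‖) := by ring

theorem apply_mul_eq_apply_mul_of_nonneg (hC : 0 ≤ C) (hb : ∀ u v, ‖φ u v‖ ≤ C * ‖u‖ * ‖v‖)
    (hφ : ∀ u v, u * v = 0 → φ u v = 0) {f : C(X, ℝ)₀}
    (hf : ∀ x, 0 ≤ f x) (u v : C(X, ℝ)₀) : φ (u * f) v = φ u (f * v) := by
  have hmul (N : ℕ) : N • ‖φ (u * f) v - φ u (f * v)‖ ≤ 40 * (C * ‖u‖ * ‖v‖) := by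
    have := norm_apply_mul_sub_apply_mul_le hC hb hφ (f := (N : ℝ) • f)
      (fun x => mul_nonneg N.cast_nonneg (hf x)) u v
    simpa [mul_smul_comm, smul_mul_assoc, ← smul_sub, norm_smul] using this
  by_contra hne
  have hpos := norm_sub_pos_iff.2 hne
  obtain ⟨N, hN⟩ := Archimedean.arch (40 * (C * ‖u‖ * ‖v‖) + 1) hpos
  linarith [hmul N]

end Balanced

namespace OrthAdditiveOn

variable {X F : Type*} [TopologicalSpace X] [CompactSpace X] [Zero X]
  [NormedAddCommGroup F] [NormedSpace ℝ F]

theorem apply_cons_mul_cons {n : ℕ} {M : C(X, ℝ)₀ [×(n + 2)]→L[ℝ] F}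
    (ho : OrthAdditiveOn (fun f => M fun _ => f) Set.univ) (hM : PermInvariant M)
    {f : C(X, ℝ)₀} (hf : ∀ x, 0 ≤ f x) (u v g : C(X, ℝ)₀) :
    M (Fin.cons (u * f) (Fin.cons v fun _ => g)) =
      M (Fin.cons u (Fin.cons (f * v) fun _ => g)) := by
  let φ : C(X, ℝ)₀ →ₗ[ℝ] C(X, ℝ)₀ →ₗ[ℝ] F :=
    LinearMap.mk₂ ℝ (fun u v => M (Fin.cons u (Fin.cons v fun _ => g)))
      (fun u u' v => M.cons_add _ _ _) (fun c u v => M.cons_smul _ _ _)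
      (fun u v v' => (M.curryLeft u).cons_add _ _ _)
      (fun c u v => (M.curryLeft u).cons_smul _ _ _)
  refine apply_mul_eq_apply_mul_of_nonneg (φ := φ) (C := ‖M‖ * ‖g‖ ^ n) (by positivity)
    (fun u v => ?_) (fun u v huv => ho.apply_cons_cons_eq_zero hM huv g) hf u v
  calc ‖M (Fin.cons u (Fin.cons v fun _ => g))‖
      ≤ ‖M‖ * (‖u‖ * (‖v‖ * ‖g‖ ^ n)) := by
        simpa [Fin.prod_univ_succ] using M.le_opNorm (Fin.cons u (Fin.cons v fun _ => g))
    _ = ‖M‖ * ‖g‖ ^ n * ‖u‖ * ‖v‖ := by ring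

theorem apply_const_eq_apply_cons_nupow {n : ℕ} {M : C(X, ℝ)₀ [×(n + 1)]→L[ℝ] F}
    (ho : OrthAdditiveOn (fun f => M fun _ => f) Set.univ) (hM : PermInvariant M)
    {f g : C(X, ℝ)₀} (hf : ∀ x, 0 ≤ f x) (hfg : f * g = f) :
    (M fun _ => f) = M (Fin.cons (nupow f (n + 1)) fun _ => g) := by
  induction n with
  | zero =>
    congr 1
    ext i
    rw [Fin.fin_one_eq_zero i]
    rfl
  | succ n ih =>
    have hpow : nupow f (n + 1) * f = nupow f (n + 2) := mul_comm _ _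
    calc (M fun _ => f) = M.curryLeft f fun _ => f := by
          rw [M.curryLeft_apply, cons_const_self]
      _ = M (Fin.cons f (Fin.cons (nupow f (n + 1)) fun _ => g)) :=
        ih (ho.curryLeft hM f) (hM.cons f)
      _ = M (Fin.cons (nupow f (n + 1)) (Fin.cons (f * g) fun _ => g)) := by
        rw [hM.apply_cons_cons_comm, hfg]
      _ = M (Fin.cons (nupow f (n + 2)) fun _ => g) := by
        rw [← ho.apply_cons_mul_cons hM hf, hpow, cons_const_self]

end OrthAdditiveOn

section Orthogonal

variable {B : Type*} [CStarAlgebra B] [PartialOrder B] [StarOrderedRing B]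

theorem le_add_algebraMap_of_norm_mul_self_sub_le {z w : B} (hz : 0 ≤ z) (hw : 0 ≤ w) {ε : ℝ}
    (hε : 0 ≤ ε) (h : ‖z * z - w * w‖ ≤ ε ^ 2) : z ≤ w + algebraMap ℝ B ε := by
  have hεw : 0 ≤ w + algebraMap ℝ B ε := add_nonneg hw (algebraMap_nonneg B hε)
  have hsa : IsSelfAdjoint (z * z - w * w) := by
    simp [isSelfAdjoint_iff, (IsSelfAdjoint.of_nonneg hz).star_eq,
      (IsSelfAdjoint.of_nonneg hw).star_eq]
  have hdiff : z * z - w * w ≤ algebraMap ℝ B (ε ^ 2) :=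
    hsa.le_algebraMap_norm_self.trans (algebraMap_mono B h)
  have hsq : z * z ≤ (w + algebraMap ℝ B ε) * (w + algebraMap ℝ B ε) :=
    calc z * z ≤ algebraMap ℝ B (ε ^ 2) + w * w := sub_le_iff_le_add.1 hdiff
      _ ≤ algebraMap ℝ B (ε ^ 2) + w * w + (ε • w + ε • w) :=
        le_add_of_nonneg_right (add_nonneg (smul_nonneg hε hw) (smul_nonneg hε hw))
      _ = _ := by
        simp only [Algebra.algebraMap_eq_smul_one, mul_add, add_mul, mul_smul_comm,
          smul_mul_assoc, one_mul, mul_one, smul_add, smul_smul, pow_two]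
        abel
  simpa only [CFC.sqrt_mul_self z hz, CFC.sqrt_mul_self _ hεw] using CFC.sqrt_le_sqrt _ _ hsq

theorem norm_sub_le_of_norm_mul_self_sub_le {z w : B} (hz : 0 ≤ z) (hw : 0 ≤ w) {ε : ℝ}
    (hε : 0 ≤ ε) (h : ‖z * z - w * w‖ ≤ ε ^ 2) : ‖z - w‖ ≤ 3 * ε := by
  have hzw := le_add_algebraMap_of_norm_mul_self_sub_le hz hw hε h
  have hwz := le_add_algebraMap_of_norm_mul_self_sub_le hw hz hε (by rwa [norm_sub_rev])
  have hnonneg : 0 ≤ z - w + algebraMap ℝ B ε := by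
    rw [sub_add_eq_add_sub]
    exact sub_nonneg.2 hwz
  have hle : z - w + algebraMap ℝ B ε ≤ algebraMap ℝ B (2 * ε) := by
    rw [two_mul, map_add]
    gcongr
    exact sub_le_iff_le_add'.2 hzw
  calc ‖z - w‖ = ‖z - w + algebraMap ℝ B ε - algebraMap ℝ B ε‖ := by rw [add_sub_cancel_right]
    _ ≤ 2 * ε + ε := norm_sub_le_of_le
      ((CStarAlgebra.norm_le_iff_le_algebraMap _ (by positivity) hnonneg).2 hle)
      ((CStarAlgebra.norm_le_iff_le_algebraMap _ hε (algebraMap_nonneg B hε)).2 le_rfl)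
    _ = 3 * ε := by ring

-- If `a` and `p` were orthogonal, `f + q` and `a + p` would both be `|a - p|`.
theorem norm_sub_le_of_sub_eq_sub {a p f q : B} (ha : 0 ≤ a) (hp : 0 ≤ p) (hf : 0 ≤ f)
    (hq : 0 ≤ q) (hsub : f - q = a - p) (hfq : f * q = 0) (hqf : q * f = 0) {ε : ℝ} (hε : 0 ≤ ε)
    (hap : ‖a * p + p * a‖ ≤ 2 * ε ^ 2) : ‖f - a‖ ≤ 3 * ε := by
  have hsq : (f + q) * (f + q) - (a + p) * (a + p) = -(2 : ℝ) • (a * p + p * a) := by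
    have : (f + q) * (f + q) = (f - q) * (f - q) := by
      simp only [add_mul, mul_add, sub_mul, mul_sub, hfq, hqf]
      abel
    rw [this, hsub, neg_smul, two_smul]
    noncomm_ring
  have hdiff : f + q - (a + p) = (2 : ℝ) • (f - a) := by
    rw [sub_eq_iff_eq_add.1 hsub, two_smul]
    abel
  have h := norm_sub_le_of_norm_mul_self_sub_le (add_nonneg hf hq) (add_nonneg ha hp)
    (ε := 2 * ε) (by positivity) (by
      rw [hsq, norm_smul, norm_neg, Real.norm_ofNat]
      linarith)
  rw [hdiff, norm_smul, Real.norm_ofNat] at h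
  linarith

theorem norm_sub_le_of_add_eq_add {A : Type*} [NonUnitalCStarAlgebra A] [PartialOrder A]
    [StarOrderedRing A] {a e f g : A} (ha : 0 ≤ a) (he : 0 ≤ e) (he1 : ‖e‖ ≤ 1)
    (hf : 0 ≤ f) (hg : 0 ≤ g) (hg1 : ‖g‖ ≤ 1) (hsum : f + g = a + e) (hfg : f * g = f)
    (hgf : g * f = f) {ε : ℝ} (hε : 0 ≤ ε) (hae : ‖a - a * e + (a - e * a)‖ ≤ 2 * ε ^ 2) :
    ‖f - a‖ ≤ 3 * ε := by
  have one_sub_nonneg {x : A} (hx : 0 ≤ x) (hx1 : ‖x‖ ≤ 1) : 0 ≤ 1 - (x : Unitization ℂ A) := by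
    rwa [sub_nonneg, ← CStarAlgebra.norm_le_one_iff_of_nonneg _ (Unitization.inr_nonneg_iff.2 hx),
      Unitization.norm_inr]
  rw [← Unitization.norm_inr (𝕜 := ℂ), Unitization.inr_sub]
  refine norm_sub_le_of_sub_eq_sub (Unitization.inr_nonneg_iff.2 ha) (one_sub_nonneg he he1)
    (Unitization.inr_nonneg_iff.2 hf) (one_sub_nonneg hg hg1) ?_ ?_ ?_ hε ?_
  · rw [sub_sub_eq_add_sub, sub_sub_eq_add_sub, ← Unitization.inr_add, ← Unitization.inr_add, hsum]
  · rw [mul_sub, mul_one, ← Unitization.inr_mul, hfg, sub_self]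
  · rw [sub_mul, one_mul, ← Unitization.inr_mul, hgf, sub_self]
  · rwa [mul_sub, mul_one, sub_mul, one_mul, ← Unitization.inr_mul, ← Unitization.inr_mul,
      ← Unitization.inr_sub, ← Unitization.inr_sub, ← Unitization.inr_add, Unitization.norm_inr]

end Orthogonal

section Powers

variable {R : Type*} [NonUnitalRing R]

theorem map_nupow {S G : Type*} [NonUnitalRing S] [FunLike G R S] [MulHomClass G R S] (φ : G)
    (a : R) (n : ℕ) : φ (nupow a (n + 1)) = nupow (φ a) (n + 1) := by
  induction n with
  | zero => rfl
  | succ n ih => exact (map_mul φ _ _).trans (by rw [ih]; rfl)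

theorem mul_nupow_eq_zero {a b : R} (hab : a * b = 0) (n : ℕ) : a * nupow b (n + 1) = 0 := by
  cases n with
  | zero => exact hab
  | succ n => exact (mul_assoc _ _ _).symm.trans (by rw [hab, zero_mul])

theorem nupow_add_of_mul_eq_zero {a b : R} (hab : a * b = 0) (hba : b * a = 0) (n : ℕ) :
    nupow (a + b) (n + 1) = nupow a (n + 1) + nupow b (n + 1) := by
  induction n with
  | zero => rfl
  | succ n ih =>
    change (a + b) * nupow (a + b) (n + 1) = a * nupow a (n + 1) + b * nupow b (n + 1)
    rw [ih, add_mul, mul_add, mul_add, mul_nupow_eq_zero hab, mul_nupow_eq_zero hba, add_zero,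
      zero_add]

theorem continuous_nupow [TopologicalSpace R] [ContinuousMul R] (n : ℕ) :
    Continuous fun a : R => nupow a (n + 1) := by
  induction n with
  | zero => exact continuous_id
  | succ n ih => exact continuous_id.mul ih

theorem analyticOnNhd_nupow {𝕜 A : Type*} [NontriviallyNormedField 𝕜] [NonUnitalNormedRing A]
    [NormedSpace 𝕜 A] [IsScalarTower 𝕜 A A] [SMulCommClass 𝕜 A A] (n : ℕ) :
    AnalyticOnNhd 𝕜 (fun a : A => nupow a (n + 1)) Set.univ := by
  induction n with
  | zero => exact analyticOnNhd_id
  | succ n ih =>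
    intro a ha
    exact ((ContinuousLinearMap.mul 𝕜 A).analyticAt_bilinear _).comp₂ analyticAt_id (ih a ha)

variable {A : Type*} [NonUnitalCStarAlgebra A] [PartialOrder A] [StarOrderedRing A]

theorem nupow_nnrpow (a : A) {r : NNReal} (hr : 0 < r) (n : ℕ) :
    nupow (a ^ r) (n + 1) = a ^ (((n + 1 : ℕ) : NNReal) * r) := by
  induction n with
  | zero => simp [nupow]
  | succ n ih =>
    change a ^ r * nupow (a ^ r) (n + 1) = _
    rw [ih, ← CFC.nnrpow_add hr (by positivity)]
    congr 1
    push_cast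
    ring

theorem exists_nonneg_nupow_eq {a : A} (ha : 0 ≤ a) (n : ℕ) :
    ∃ b : A, 0 ≤ b ∧ nupow b (n + 1) = a := by
  refine ⟨a ^ (((n + 1 : ℕ) : NNReal)⁻¹), CFC.nnrpow_nonneg, ?_⟩
  rw [nupow_nnrpow _ (by positivity), mul_inv_cancel₀ (by positivity), CFC.nnrpow_one a ha]

end Powers

section Splitting

theorem exists_add_eq_and_mul_eq_left {X : Type*} [TopologicalSpace X] [CompactSpace X] [Zero X]
    {h : C(X, ℝ)₀} (hh : ∀ x, 0 ≤ h x) :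
    ∃ f g : C(X, ℝ)₀, (∀ x, 0 ≤ f x) ∧ (∀ x, 0 ≤ g x) ∧ ‖g‖ ≤ 1 ∧ f + g = h ∧ f * g = f := by
  let excess : C(ℝ, ℝ)₀ := ⟨⟨fun t => max (t - 1) 0, by fun_prop⟩, by simp⟩
  let trunc : C(ℝ, ℝ)₀ := ⟨⟨fun t => min t 1, by fun_prop⟩, by simp⟩
  have trunc_nonneg (x : X) : 0 ≤ trunc (h x) := le_min (hh x) zero_le_one
  refine ⟨excess.comp h, trunc.comp h, fun x => le_max_right _ _, trunc_nonneg,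
    norm_le_of_forall_abs_le zero_le_one fun x => ?_, ?_, ?_⟩
  · exact (abs_of_nonneg (trunc_nonneg x)).trans_le (min_le_right _ _)
  · ext x
    change max (h x - 1) 0 + min (h x) 1 = h x
    rcases le_total (h x) 1 with hx | hx
    · rw [max_eq_right (sub_nonpos.2 hx), min_eq_left hx, zero_add]
    · rw [max_eq_left (sub_nonneg.2 hx), min_eq_right hx, sub_add_cancel]
  · ext x
    change max (h x - 1) 0 * min (h x) 1 = max (h x - 1) 0
    rcases le_total (h x) 1 with hx | hx
    · rw [max_eq_right (sub_nonpos.2 hx), zero_mul]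
    · rw [min_eq_right hx, mul_one]

theorem OrthAdditiveOn.comp {R S F G : Type*} [NonUnitalNonAssocRing R] [NonUnitalNonAssocRing S]
    [Add F] [FunLike G R S] [NonUnitalRingHomClass G R S] {p : S → F} {s : Set S}
    (hp : OrthAdditiveOn p s) (φ : G) {t : Set R} (hφ : Set.MapsTo φ t s) :
    OrthAdditiveOn (fun a => p (φ a)) t := by
  intro a ha b hb hab hba
  simp only [map_add]
  exact hp _ (hφ ha) _ (hφ hb) (by rw [← map_mul, hab, map_zero])
    (by rw [← map_mul, hba, map_zero])

variable {A F : Type*} [NonUnitalCStarAlgebra A] [PartialOrder A] [StarOrderedRing A]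
  [NormedAddCommGroup F] [NormedSpace ℂ F] {n : ℕ} {L : A [×(n + 1)]→L[ℂ] F}

theorem OrthAdditiveOn.exists_add_eq_and_apply_const_eq
    (ho : OrthAdditiveOn (fun a => L fun _ => a) {a | IsSelfAdjoint a}) (hL : PermInvariant L)
    {x : A} (hx : 0 ≤ x) :
    ∃ f g : A, 0 ≤ f ∧ 0 ≤ g ∧ ‖g‖ ≤ 1 ∧ f + g = x ∧ f * g = f ∧ g * f = f ∧
      (L fun _ => f) = L (Fin.cons (nupow f (n + 1)) fun _ => g) := by
  have hxs : IsSelfAdjoint x := .of_nonneg hx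
  let τ := cfcₙHom (R := ℝ) hxs
  obtain ⟨f, g, hf, hg, hg1, hsum, hfg⟩ :=
    exists_add_eq_and_mul_eq_left (h := ContinuousMapZero.id (quasispectrum ℝ x))
      fun t => quasispectrum_nonneg_of_nonneg x hx (t : ℝ) t.2
  let M := (L.restrictScalars ℝ).compContinuousLinearMap fun _ => cfcₙL (R := ℝ) hxs
  have hM : PermInvariant M := fun v σ => hL (fun i => τ (v i)) σ
  have hoM : OrthAdditiveOn (fun h => M fun _ => h) Set.univ :=
    ho.comp τ fun h _ => cfcₙHom_predicate hxs h
  refine ⟨τ f, τ g, (cfcₙHom_nonneg_iff hxs).2 hf, (cfcₙHom_nonneg_iff hxs).2 hg,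
    (norm_cfcₙHom x g hxs).trans_le hg1, ?_, ?_, ?_, ?_⟩
  · rw [← map_add, hsum]
    exact cfcₙHom_id hxs
  · rw [← map_mul, hfg]
  · rw [← map_mul, mul_comm, hfg]
  · refine (hoM.apply_const_eq_apply_cons_nupow hM hf hfg).trans (congrArg L ?_)
    ext i
    cases i using Fin.cases
    · exact map_nupow τ f n
    · rfl

end Splitting

section Limits

theorem tendsto_apply_sub_apply {𝕜 ι α G : Type*} {E : ι → Type*} [Fintype ι]
    [NontriviallyNormedField 𝕜] [∀ i, NormedAddCommGroup (E i)] [∀ i, NormedSpace 𝕜 (E i)]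
    [NormedAddCommGroup G] [NormedSpace 𝕜 G] (L : ContinuousMultilinearMap 𝕜 E G)
    {l : Filter α} {v w : α → ∀ i, E i} {C : ℝ} (hv : ∀ᶠ x in l, ‖v x‖ ≤ C)
    (hw : ∀ᶠ x in l, ‖w x‖ ≤ C) (hvw : Tendsto (fun x => v x - w x) l (𝓝 0)) :
    Tendsto (fun x => L (v x) - L (w x)) l (𝓝 0) := by
  have hbound : ∀ᶠ x in l, ‖L (v x) - L (w x)‖ ≤
      ‖L‖ * Fintype.card ι * C ^ (Fintype.card ι - 1) * ‖v x - w x‖ := by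
    filter_upwards [hv, hw] with x hvx hwx
    refine (L.norm_image_sub_le _ _).trans ?_
    gcongr
    exact max_le hvx hwx
  refine squeeze_zero_norm' hbound ?_
  simpa using hvw.norm.const_mul (‖L‖ * Fintype.card ι * C ^ (Fintype.card ι - 1))

theorem norm_cons_const_le {E : Type*} [SeminormedAddGroup E] {n : ℕ} {x y : E} {C : ℝ}
    (hC : 0 ≤ C) (hx : ‖x‖ ≤ C) (hy : ‖y‖ ≤ C) :
    ‖(Fin.cons x fun _ => y : Fin (n + 1) → E)‖ ≤ C := by
  refine (pi_norm_le_iff_of_nonneg hC).2 fun i => ?_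
  cases i using Fin.cases
  · exact hx
  · exact hy

theorem tendsto_cons_const {E α : Type*} [TopologicalSpace E] {n : ℕ} {l : Filter α} {x y : α → E}
    {a b : E} (hx : Tendsto x l (𝓝 a)) (hy : Tendsto y l (𝓝 b)) :
    Tendsto (fun t => (Fin.cons (x t) fun _ => y t : Fin (n + 1) → E)) l
      (𝓝 (Fin.cons a fun _ => b)) := by
  refine tendsto_pi_nhds.2 fun i => ?_
  cases i using Fin.cases
  · exact hx
  · exact hy

variable {A F : Type*} [NonUnitalCStarAlgebra A] [PartialOrder A] [StarOrderedRing A]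
  [NormedAddCommGroup F] [NormedSpace ℂ F] {n : ℕ} {L : A [×(n + 1)]→L[ℂ] F}

theorem OrthAdditiveOn.exists_tendsto_apply_const_eq
    (ho : OrthAdditiveOn (fun a => L fun _ => a) {a | IsSelfAdjoint a}) (hL : PermInvariant L)
    {l : Filter A} (hl : l.IsIncreasingApproximateUnit) {a : A} (ha : 0 ≤ a) :
    ∃ f g : A → A, Tendsto f l (𝓝 a) ∧ ∀ᶠ e in l, ‖g e‖ ≤ 1 ∧ f e + g e = a + e ∧
      (L fun _ => f e) = L (Fin.cons (nupow (f e) (n + 1)) fun _ => g e) := by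
  choose! f g hf hg hg1 hsum hfg hgf hLfg using fun (e : A) (he : 0 ≤ e) =>
    ho.exists_add_eq_and_apply_const_eq hL (add_nonneg ha he)
  refine ⟨f, g, ?_, ?_⟩
  · rw [tendsto_iff_norm_sub_tendsto_zero]
    refine squeeze_zero' (g := fun e => 3 * √(‖a - a * e + (a - e * a)‖ / 2))
      (Eventually.of_forall fun _ => norm_nonneg _) ?_ ?_
    · filter_upwards [hl.eventually_nonneg, hl.eventually_norm] with e he he1
      refine norm_sub_le_of_add_eq_add ha he he1 (hf e he) (hg e he) (hg1 e he) (hsum e he)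
        (hfg e he) (hgf e he) (Real.sqrt_nonneg _) ?_
      rw [Real.sq_sqrt (by positivity)]
      linarith
    · have := ((((hl.tendsto_mul_left a).const_sub a).add
        ((hl.tendsto_mul_right a).const_sub a)).norm.div_const 2).sqrt.const_mul 3
      simpa using this
  · filter_upwards [hl.eventually_nonneg] with e he
    exact ⟨hg1 e he, hsum e he, hLfg e he⟩

theorem OrthAdditiveOn.tendsto_apply_cons_nupow
    (ho : OrthAdditiveOn (fun a => L fun _ => a) {a | IsSelfAdjoint a}) (hL : PermInvariant L)
    {l : Filter A} (hl : l.IsIncreasingApproximateUnit) {a : A} (ha : 0 ≤ a) :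
    Tendsto (fun e => L (Fin.cons (nupow a (n + 1)) fun _ => e)) l (𝓝 (L fun _ => a)) := by
  obtain ⟨f, g, hf, hfg⟩ := ho.exists_tendsto_apply_const_eq hL hl ha
  have hpow : Tendsto (fun e => nupow (f e) (n + 1)) l (𝓝 (nupow a (n + 1))) :=
    ((continuous_nupow n).tendsto a).comp hf
  have hLf : Tendsto (fun e => L fun _ => f e) l (𝓝 (L fun _ => a)) :=
    (L.cont.tendsto _).comp (tendsto_pi_nhds.2 fun _ => hf)
  set C : ℝ := ‖nupow a (n + 1)‖ + 1
  have hC1 : 1 ≤ C := le_add_of_nonneg_left (norm_nonneg _)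
  have hC0 : 0 ≤ C := zero_le_one.trans hC1
  have hdiff : Tendsto (fun e => L (Fin.cons (nupow a (n + 1)) fun _ => e) -
      L (Fin.cons (nupow (f e) (n + 1)) fun _ => g e)) l (𝓝 0) := by
    refine tendsto_apply_sub_apply L (C := C) ?_ ?_ ?_
    · filter_upwards [hl.eventually_norm] with e he1
      exact norm_cons_const_le hC0 (le_add_of_nonneg_right zero_le_one) (he1.trans hC1)
    · filter_upwards [hfg, hpow.norm.eventually_lt_const (lt_add_one _)] with e ⟨hg1, _⟩ hlt
      exact norm_cons_const_le hC0 hlt.le (hg1.trans hC1)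
    · have hcons := tendsto_cons_const (n := n) (hpow.const_sub (nupow a (n + 1)))
        (hf.sub_const a)
      rw [sub_self, sub_self, cons_const_self] at hcons
      refine hcons.congr' ?_
      filter_upwards [hfg] with e ⟨_, hsum, _⟩
      ext i
      cases i using Fin.cases
      · rfl
      · exact sub_eq_sub_iff_add_eq_add.2 (hsum.trans (add_comm a e))
  rw [← zero_add (L fun _ => a)]
  refine (hdiff.add hLf).congr' ?_
  filter_upwards [hfg] with e ⟨_, _, hLfg⟩
  rw [hLfg, sub_add_cancel]

theorem exists_forall_tendsto_of_nonneg {α : Type*} {l : Filter α} [l.NeBot] {G : α → A →L[ℂ] F}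
    {C : ℝ} (hC : ∀ᶠ x in l, ‖G x‖ ≤ C)
    (hG : ∀ a : A, 0 ≤ a → ∃ y, Tendsto (fun x => G x a) l (𝓝 y)) :
    ∃ T : A →L[ℂ] F, ∀ a, Tendsto (fun x => G x a) l (𝓝 (T a)) := by
  have hall (a : A) : ∃ y, Tendsto (fun x => G x a) l (𝓝 y) := by
    obtain ⟨b, hb, -, rfl⟩ := CStarAlgebra.exists_sum_four_nonneg a
    choose y hy using fun i => hG (b i) (hb i)
    refine ⟨∑ i : Fin 4, Complex.I ^ (i : ℕ) • y i, ?_⟩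
    simp only [map_sum, map_smul]
    exact tendsto_finsetSum _ fun i _ => (hy i).const_smul _
  choose t ht using hall
  let T : A →ₗ[ℂ] F := linearMapOfTendsto t (fun x => (G x : A →ₗ[ℂ] F)) (tendsto_pi_nhds.2 ht)
  refine ⟨T.mkContinuous C fun a => le_of_tendsto (ht a).norm ?_, ht⟩
  filter_upwards [hC] with x hx
  exact (G x).le_of_opNorm_le hx a

theorem OrthAdditiveOn.exists_clm_forall_nonneg
    (ho : OrthAdditiveOn (fun a => L fun _ => a) {a | IsSelfAdjoint a}) (hL : PermInvariant L) :
    ∃ T : A →L[ℂ] F, ∀ a : A, 0 ≤ a → (L fun _ => a) = T (nupow a (n + 1)) := by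
  have hl := CStarAlgebra.increasingApproximateUnit A
  have := hl.neBot
  let G (e : A) : A →L[ℂ] F := L.toContinuousLinearMap (fun _ => e) 0
  have hG (e a : A) : G e a = L (Fin.cons a fun _ => e) := by
    rw [← hL.apply_update_const a e 0]
    rfl
  have hnorm : ∀ᶠ e in CStarAlgebra.approximateUnit A, ‖G e‖ ≤ ‖L‖ := by
    filter_upwards [hl.eventually_norm] with e he
    refine (G e).opNorm_le_bound (norm_nonneg L) fun a => ?_
    calc ‖G e a‖ = ‖L (Fin.cons a fun _ => e)‖ := by rw [hG]
      _ ≤ ‖L‖ * (‖a‖ * ‖e‖ ^ n) := by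
        simpa [Fin.prod_univ_succ] using L.le_opNorm (Fin.cons a fun _ => e)
      _ ≤ ‖L‖ * ‖a‖ := by
        gcongr
        exact mul_le_of_le_one_right (norm_nonneg a) (pow_le_one₀ (norm_nonneg e) he)
  have hpow {a : A} (ha : 0 ≤ a) : Tendsto (fun e => G e (nupow a (n + 1)))
      (CStarAlgebra.approximateUnit A) (𝓝 (L fun _ => a)) := by
    simpa only [hG] using ho.tendsto_apply_cons_nupow hL hl ha
  obtain ⟨T, hT⟩ := exists_forall_tendsto_of_nonneg hnorm fun a ha => by
    obtain ⟨b, hb, rfl⟩ := exists_nonneg_nupow_eq ha n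
    exact ⟨_, hpow hb⟩
  exact ⟨T, fun a ha => tendsto_nhds_unique (hpow ha) (hT _)⟩

end Limits

section Extension

variable {F : Type*} [NormedAddCommGroup F] [NormedSpace ℂ F]

theorem eq_of_forall_nonneg_of_analyticOnNhd {u v : ℂ → F} (hu : AnalyticOnNhd ℂ u Set.univ)
    (hv : AnalyticOnNhd ℂ v Set.univ) (h : ∀ t : ℝ, 0 ≤ t → u t = v t) : u = v := by
  have htendsto : Tendsto (fun t : ℝ => (t : ℂ)) (𝓝[>] 0) (𝓝[≠] 0) := by
    refine tendsto_nhdsWithin_iff.2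
      ⟨(Complex.continuous_ofReal.tendsto' 0 0 rfl).mono_left nhdsWithin_le_nhds, ?_⟩
    filter_upwards [self_mem_nhdsWithin] with t ht
    simpa using ht.ne'
  refine hu.eq_of_frequently_eq hv (htendsto.frequently (Eventually.frequently ?_))
  filter_upwards [self_mem_nhdsWithin] with t ht
  exact h t ht.le

theorem apply_add_smul_eq_of_forall_nonneg {E : Type*} [NormedAddCommGroup E] [NormedSpace ℂ E]
    {p q : E → F} (hp : AnalyticOnNhd ℂ p Set.univ) (hq : AnalyticOnNhd ℂ q Set.univ) {x y : E}
    (h : ∀ t : ℝ, 0 ≤ t → p (x + (t : ℂ) • y) = q (x + (t : ℂ) • y)) (z : ℂ) :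
    p (x + z • y) = q (x + z • y) := by
  have hline : AnalyticOnNhd ℂ (fun z : ℂ => x + z • y) Set.univ := fun z _ =>
    analyticAt_const.add (analyticAt_id.smul analyticAt_const)
  exact congrFun (eq_of_forall_nonneg_of_analyticOnNhd
    (hp.comp hline (Set.mapsTo_univ _ _)) (hq.comp hline (Set.mapsTo_univ _ _)) h) z

theorem eq_of_eqOn_nonneg_of_analyticOnNhd {A : Type*} [NonUnitalCStarAlgebra A] [PartialOrder A]
    [StarOrderedRing A] {p q : A → F} (hp : AnalyticOnNhd ℂ p Set.univ)
    (hq : AnalyticOnNhd ℂ q Set.univ) (h : ∀ a, 0 ≤ a → p a = q a) : p = q := by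
  have hsa {a : A} (ha : IsSelfAdjoint a) : p a = q a := by
    have := apply_add_smul_eq_of_forall_nonneg hp hq (x := a⁺) (y := a⁻) (fun t ht => h _ ?_) (-1)
    · rwa [neg_one_smul, ← sub_eq_add_neg, CFC.posPart_sub_negPart a ha] at this
    · rw [Complex.coe_smul]
      exact add_nonneg (CFC.posPart_nonneg a) (smul_nonneg ht (CFC.negPart_nonneg a))
  ext a
  rw [← realPart_add_I_smul_imaginaryPart a]
  refine apply_add_smul_eq_of_forall_nonneg hp hq (fun t _ => hsa ?_) Complex.I
  rw [Complex.coe_smul]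
  exact (realPart a).2.add ((IsSelfAdjoint.all t).smul (imaginaryPart a).2)

end Extension

theorem OrthAdditiveOn.exists_clm_apply_const_eq {A F : Type*} [NonUnitalCStarAlgebra A]
    [NormedAddCommGroup F] [NormedSpace ℂ F] {n : ℕ} {L : A [×(n + 1)]→L[ℂ] F}
    (ho : OrthAdditiveOn (fun a => L fun _ => a) {a | IsSelfAdjoint a}) (hL : PermInvariant L) :
    ∃ T : A →L[ℂ] F, ∀ a, (L fun _ => a) = T (nupow a (n + 1)) := by
  let := CStarAlgebra.spectralOrder A
  have := CStarAlgebra.spectralOrderedRing A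
  obtain ⟨T, hT⟩ := ho.exists_clm_forall_nonneg hL
  have hdiag : AnalyticOnNhd ℂ (fun a => L fun _ => a) Set.univ := fun _ _ =>
    L.analyticAt.comp (.pi fun _ => analyticAt_id)
  have hpow : AnalyticOnNhd ℂ (fun a => T (nupow a (n + 1))) Set.univ := fun a ha =>
    (T.analyticAt _).comp (analyticOnNhd_nupow n a ha)
  exact ⟨T, congrFun (eq_of_eqOn_nonneg_of_analyticOnNhd hdiag hpow hT)⟩

theorem orthAdditiveOn_univ {R F : Type*} [NonUnitalNonAssocRing R] [Add F] {p : R → F} :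
    OrthAdditiveOn p Set.univ ↔ ∀ a b, a * b = 0 → b * a = 0 → p (a + b) = p a + p b :=
  ⟨fun h a b => h a trivial b trivial, fun h a _ b _ => h a b⟩

theorem orthAdditiveOn_setOf_isSelfAdjoint {R F : Type*} [NonUnitalNonAssocRing R] [StarRing R]
    [Add F] {p : R → F} : OrthAdditiveOn p {a | IsSelfAdjoint a} ↔
      ∀ a b, IsSelfAdjoint a → IsSelfAdjoint b → a * b = 0 → p (a + b) = p a + p b :=
  ⟨fun h a b ha hb hab => h a ha b hb hab ((ha.commute_of_mul_eq_zero hb hab).eq.symm.trans hab),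
    fun h a ha b hb hab _ => h a b ha hb hab⟩

/-- for a bounded `n`-homogeneous polynomial `P : A → F` on a C*-algebra,
the following are equivalent: (1) `P(a) = T(aⁿ)` for a bounded linear `T`;
(2) `P` is orthogonally additive on `A`; (3) `P` is orthogonally additive on `A_sa`. -/
theorem stmt_5 {A : Type*} [NonUnitalCStarAlgebra A]
    {F : Type*} [NormedAddCommGroup F] [NormedSpace ℂ F]
    (n : ℕ) (hn : 0 < n) (P : A → F) (hP : IsHomogPolynomial n P) :
    ((∃ T : A →L[ℂ] F, ∀ a : A, P a = T (nupow a n)) ↔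
      (∀ a b : A, a * b = 0 → b * a = 0 → P (a + b) = P a + P b)) ∧
    ((∀ a b : A, a * b = 0 → b * a = 0 → P (a + b) = P a + P b) ↔
      (∀ a b : A, IsSelfAdjoint a → IsSelfAdjoint b → a * b = 0 →
        P (a + b) = P a + P b)) := by
  obtain ⟨m, rfl⟩ := Nat.exists_eq_succ_of_ne_zero hn.ne'
  obtain ⟨L, hL, hPL⟩ := hP
  rw [← orthAdditiveOn_univ, ← orthAdditiveOn_setOf_isSelfAdjoint]
  have h12 : (∃ T : A →L[ℂ] F, ∀ a, P a = T (nupow a (m + 1))) → OrthAdditiveOn P Set.univ := by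
    rintro ⟨T, hT⟩ a _ b _ hab hba
    rw [hT, hT, hT, nupow_add_of_mul_eq_zero hab hba, map_add]
  have h23 (h : OrthAdditiveOn P Set.univ) : OrthAdditiveOn P {a | IsSelfAdjoint a} :=
    fun a _ b _ => h a trivial b trivial
  have h31 (h : OrthAdditiveOn P {a | IsSelfAdjoint a}) :
      ∃ T : A →L[ℂ] F, ∀ a, P a = T (nupow a (m + 1)) := by
    rw [funext hPL] at h ⊢
    exact h.exists_clm_apply_const_eq hL
  exact ⟨⟨h12, h31 ∘ h23⟩, ⟨h23, h12 ∘ h31⟩⟩
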